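/- Let s be a positive integer, let A ∈ ℝ^{s×s} and B ∈ ℝ^{s} be fixed matrices, let f : ℝ → ℝ be a function, and let c : ℝ → ℝ^s satisfy, for every t > 0, the derivative identity c'(t) = −(1/t)·A·c(t) + (1/t)·B·f(t). Then for every β > 0, the dilated functions c̃(t) := c(βt) and f̃(t) := f(βt) satisfy, for every t > 0, c̃'(t) = −(1/t)·A·c̃(t) + (1/t)·B·f̃(t). In other words, the HiPPO-LegS projection dynamics are equivariant under time dilation: dilating the input signal dilates the coefficient trajectory by the same factor without changing the dynamics. -/

import Mathlib

open Matrix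

/-!
The factor `β` produced by the chain rule turns the rate `(β t)⁻¹` into `t⁻¹`. Hence every equation
`c' = t⁻¹ • Φ c u` whose only explicit time dependence is the rate `t⁻¹` is equivariant under
dilation; the LegS dynamics are the case `Φ x u = -A x + u B`.
-/

section Dilation

variable {𝕜 E : Type*} [NontriviallyNormedField 𝕜] [NormedAddCommGroup E] [NormedSpace 𝕜 E]

theorem hasDerivAt_comp_mul_left_of_inv_smul {c : 𝕜 → E} {v : E} {β t : 𝕜} (hβ : β ≠ 0)
    (hc : HasDerivAt c ((β * t)⁻¹ • v) (β * t)) :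
    HasDerivAt (fun r => c (β * r)) (t⁻¹ • v) t := by
  have rate_eq : β * (β * t)⁻¹ = t⁻¹ := by rw [mul_inv, mul_inv_cancel_left₀ hβ]
  have chain_rule : HasDerivAt (fun r => c (β * r)) (β • (β * t)⁻¹ • v) t :=
    hc.scomp t (hasDerivAt_const_mul β)
  rwa [smul_smul, rate_eq] at chain_rule

end Dilation

theorem stmt_4_general {E U : Type*} [NormedAddCommGroup E] [NormedSpace ℝ E]
    (Φ : E → U → E) {f : ℝ → U} {c : ℝ → E}
    (hc : ∀ t : ℝ, 0 < t → HasDerivAt c (t⁻¹ • Φ (c t) (f t)) t) :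
    ∀ β : ℝ, 0 < β → ∀ t : ℝ, 0 < t →
      HasDerivAt (fun r => c (β * r)) (t⁻¹ • Φ (c (β * t)) (f (β * t))) t :=
  fun β hβ t ht => hasDerivAt_comp_mul_left_of_inv_smul hβ.ne' (hc (β * t) (mul_pos hβ ht))

/-- Timescale equivariance of HiPPO-LegS dynamics: if
`c'(t) = −(1/t) A c(t) + (1/t) B f(t)` for all `t > 0`, then for every dilation
factor `β > 0` the dilated trajectory `c̃(t) = c(βt)` satisfies the same dynamics
driven by the dilated input `f̃(t) = f(βt)`. -/
theorem stmt_4 (s : ℕ) (hs : 0 < s)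
    (A : Matrix (Fin s) (Fin s) ℝ) (B : Fin s → ℝ)
    (f : ℝ → ℝ) (c : ℝ → (Fin s → ℝ))
    (hc : ∀ t : ℝ, 0 < t →
      HasDerivAt c (-((1 / t) • A.mulVec (c t)) + ((1 / t) * f t) • B) t) :
    ∀ β : ℝ, 0 < β → ∀ t : ℝ, 0 < t →
      HasDerivAt (fun r : ℝ => c (β * r))
        (-((1 / t) • A.mulVec (c (β * t))) + ((1 / t) * f (β * t)) • B) t := by
  simp only [one_div, mul_smul, ← smul_neg, ← smul_add] at hc ⊢
  exact stmt_4_general (fun x u => -(A *ᵥ x) + u • B) hc
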